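/- arXiv:1605.02571 — 2 statements merged into one kernel-verified Lean document; each statement's English description precedes it below -/
import Mathlib

section
/- Let X be a Tychonoff space and let λ, μ ∈ Ψ with μ ⊆ λ. Then the bitopological space (C(X), τ_λ, τ_μ) has countable (τ_λ, τ_μ)-tightness if and only if X is λ-μ-Lindelöf. -/
open Set Filter Topology TopologicalSpace ContinuousMap

/-- A subset `A` of `X` is *C-compact* if `f '' A` is compact in `ℝ` for every
continuous real-valued function `f` on `X`. -/
def IsCCompact {X : Type*} [TopologicalSpace X] (A : Set X) : Prop :=
  ∀ f : C(X, ℝ), IsCompact (f '' A)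

/-- The `λ`-open (set-open) topology on `C(X, ℝ)`, generated by the subbasic sets
`[F, U] = {f : f '' F ⊆ U}` for `F ∈ lam` and `U ⊆ ℝ` open. -/
def setOpenTopology {X : Type*} [TopologicalSpace X] (lam : Set (Set X)) :
    TopologicalSpace C(X, ℝ) :=
  TopologicalSpace.generateFrom
    {S | ∃ F ∈ lam, ∃ U : Set ℝ, IsOpen U ∧ S = {f : C(X, ℝ) | f '' F ⊆ U}}

/-- Membership in the collection `Ψ`: a family of nonempty closed C-compact subsets of `X`
forming a π-network, hereditary with respect to (closed) C-compact subsets of its elements,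
and maximal among families of nonempty sets inducing the same set-open topology. -/
structure MemPsi {X : Type*} [TopologicalSpace X] (lam : Set (Set X)) : Prop where
  nonempty : ∀ A ∈ lam, A.Nonempty
  closed : ∀ A ∈ lam, IsClosed A
  ccompact : ∀ A ∈ lam, IsCCompact A
  piNetwork : ∀ U : Set X, IsOpen U → U.Nonempty → ∃ A ∈ lam, A ⊆ U
  hereditary : ∀ A ∈ lam, ∀ B : Set X, B ⊆ A → B.Nonempty → IsClosed B → IsCCompact B →
    B ∈ lam
  maximal : ∀ lam' : Set (Set X), (∀ A ∈ lam', A.Nonempty) →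
    setOpenTopology lam' = setOpenTopology lam → lam' ⊆ lam

/-- A cozero (functional open) subset of `X`: the complement of a zero-set. -/
def IsCozero {X : Type*} [TopologicalSpace X] (U : Set X) : Prop :=
  ∃ f : C(X, ℝ), U = {x | f x ≠ 0}

/-- `𝒰` is a `λ`-f-cover: a family of cozero sets, not containing `X`, such that every
member of `lam` is contained in some member of `𝒰`. -/
def IsFCover {X : Type*} [TopologicalSpace X] (lam : Set (Set X)) (𝒰 : Set (Set X)) : Prop :=
  (Set.univ : Set X) ∉ 𝒰 ∧ (∀ U ∈ 𝒰, IsCozero U) ∧ ∀ A ∈ lam, ∃ U ∈ 𝒰, A ⊆ U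

/-- `Λ(λ)`: the collection of all `λ`-f-covers of `X`. -/
def fCovers {X : Type*} [TopologicalSpace X] (lam : Set (Set X)) : Set (Set (Set X)) :=
  {𝒰 | IsFCover lam 𝒰}

/-- The selection principle `S₁(𝒜, ℬ)`. -/
def S1 {α : Type*} (𝒜 ℬ : Set (Set α)) : Prop :=
  ∀ A : ℕ → Set α, (∀ n, A n ∈ 𝒜) →
    ∃ b : ℕ → α, (∀ n, b n ∈ A n) ∧ Set.range b ∈ ℬ

/-- The selection principle `S_fin(𝒜, ℬ)`. -/
def Sfin {α : Type*} (𝒜 ℬ : Set (Set α)) : Prop :=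
  ∀ A : ℕ → Set α, (∀ n, A n ∈ 𝒜) →
    ∃ B : ℕ → Set α, (∀ n, (B n).Finite ∧ B n ⊆ A n) ∧ (⋃ n, B n) ∈ ℬ

/-- `Ω_y` with respect to the topology `t`: sets having `y` in their closure but not
containing `y`. -/
def OmegaPt {Y : Type*} (t : TopologicalSpace Y) (y : Y) : Set (Set Y) :=
  {A | y ∈ @closure Y t A ∧ y ∉ A}

/-- Countable `(t₁, t₂)`-tightness of a bitopological space. -/
def CountableBiTightness {Y : Type*} (t1 t2 : TopologicalSpace Y) : Prop :=
  ∀ A : Set Y, ∀ f ∈ @closure Y t1 A, ∃ B ⊆ A, B.Countable ∧ f ∈ @closure Y t2 B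

/-- `X` is `λ`-`μ`-Lindelöf: every `λ`-f-cover has a countable subfamily which is a
`μ`-f-cover. -/
def LamMuLindelof {X : Type*} [TopologicalSpace X] (lam mu : Set (Set X)) : Prop :=
  ∀ 𝒰 : Set (Set X), IsFCover lam 𝒰 → ∃ 𝒱 ⊆ 𝒰, 𝒱.Countable ∧ IsFCover mu 𝒱

/-- Countable `(t₁, t₂)`-T-tightness: for every uncountable regular cardinal `κ` and every
increasing `κ`-indexed sequence of `t₁`-closed sets, the union is `t₂`-closed. -/
def CountableBiTTightness {Y : Type*} (t1 t2 : TopologicalSpace Y) : Prop :=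
  ∀ κ : Cardinal.{0}, Cardinal.aleph0 < κ → κ.IsRegular →
    ∀ A : κ.ord.ToType → Set Y, Monotone A → (∀ α, @IsClosed Y t1 (A α)) →
      @IsClosed Y t2 (⋃ α, A α)

/-- `X` is separably `λ`-submetrizable: there is a continuous map of `X` onto a separable
metric space which is one-to-one on `⋃ lam`. -/
def SeparablyLamSubmetrizable (X : Type*) [TopologicalSpace X] (lam : Set (Set X)) : Prop :=
  ∃ (Y : Type) (m : MetricSpace Y),
    @SeparableSpace Y m.toPseudoMetricSpace.toUniformSpace.toTopologicalSpace ∧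
    ∃ f : X → Y,
      @Continuous X Y _ m.toPseudoMetricSpace.toUniformSpace.toTopologicalSpace f ∧
      Function.Surjective f ∧ Set.InjOn f (⋃₀ lam)

/-- `R`-separability for a pair of topologies: from every sequence of `t₁`-dense sets one
can pick single points forming a `t₂`-dense set. -/
def RSepBi {Y : Type*} (t1 t2 : TopologicalSpace Y) : Prop :=
  ∀ D : ℕ → Set Y, (∀ n, @Dense Y t1 (D n)) →
    ∃ d : ℕ → Y, (∀ n, d n ∈ D n) ∧ @Dense Y t2 (Set.range d)

/-- `M`-separability for a pair of topologies. -/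
def MSepBi {Y : Type*} (t1 t2 : TopologicalSpace Y) : Prop :=
  ∀ D : ℕ → Set Y, (∀ n, @Dense Y t1 (D n)) →
    ∃ F : ℕ → Set Y, (∀ n, (F n).Finite ∧ F n ⊆ D n) ∧ @Dense Y t2 (⋃ n, F n)

/-- `H`-separability for a pair of topologies. -/
def HSepBi {Y : Type*} (t1 t2 : TopologicalSpace Y) : Prop :=
  ∀ D : ℕ → Set Y, (∀ n, @Dense Y t1 (D n)) →
    ∃ F : ℕ → Set Y, (∀ n, (F n).Finite ∧ F n ⊆ D n) ∧
      ∀ G : Set Y, @IsOpen Y t2 G → G.Nonempty →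
        ∀ᶠ n in Filter.atTop, (G ∩ F n).Nonempty

/-- A countable set `D` is groupable with respect to the topology `t`. -/
def GroupableIn {Y : Type*} (t : TopologicalSpace Y) (D : Set Y) : Prop :=
  ∃ A : ℕ → Set Y, (∀ n, (A n).Finite) ∧ D = ⋃ n, A n ∧
    ∀ G : Set Y, @IsOpen Y t G → G.Nonempty →
      ∀ᶠ n in Filter.atTop, (G ∩ A n).Nonempty

/-- `GN`-separability for a pair of topologies. -/
def GNSepBi {Y : Type*} (t1 t2 : TopologicalSpace Y) : Prop :=
  ∀ D : ℕ → Set Y, (∀ n, @Dense Y t1 (D n)) →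
    ∃ d : ℕ → Y, (∀ n, d n ∈ D n) ∧ @Dense Y t2 (Set.range d) ∧
      GroupableIn t2 (Set.range d)

/-- The `(t₁, t₂)`-Pytkeev property for a bitopological space. -/
def PytkeevBi {Y : Type*} (t1 t2 : TopologicalSpace Y) : Prop :=
  ∀ A : Set Y, ∀ g ∈ @closure Y t1 A, g ∉ A →
    ∃ B : ℕ → Set Y, (∀ n, (B n).Infinite ∧ B n ⊆ A) ∧
      ∀ G ∈ @nhds Y t2 g, ∃ n, B n ⊆ G

/-- A groupable `μ`-f-cover. -/
def GroupableFCover {X : Type*} [TopologicalSpace X] (mu 𝒱 : Set (Set X)) : Prop :=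
  𝒱.Countable ∧ IsFCover mu 𝒱 ∧
    ∃ G : ℕ → Set (Set X), (∀ m, (G m).Finite) ∧
      (Pairwise fun m k => Disjoint (G m) (G k)) ∧ 𝒱 = ⋃ m, G m ∧
      ∀ F ∈ mu, ∀ᶠ m in Filter.atTop, ∃ U ∈ G m, F ⊆ U

/-!
`τ_λ` is the topology of uniform convergence on the members of `λ`: cut a C-compact `A` into
finitely many slices `A ∩ f ⁻¹' K` with `K` a small closed ball; a function close to `f` on each
slice is uniformly close to `f` on `A`. Hence `f` lies in the closure of `S` iff each `A ∈ λ` and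
`ε > 0` admit some `g ∈ S` within `ε` of `f` on `A`.

A `λ`-f-cover `𝒰` then corresponds to the family of functions equal to `1` off some `U ∈ 𝒰`, which
accumulates at `0`: a function within `1` of `0` on `A` can equal `1` off `U` only if `A ⊆ U`.
Conversely, if `f` lies in the closure of `S`, then for each `n` the cozero sets where
`|g - f| < 1 / (n + 1)`, `g ∈ S`, form a `λ`-f-cover (unless one of them is `X`), and countable
subcovers for all `n` give a countable subset of `S` accumulating at `f`.
-/

section CCompact

variable {X : Type*} [TopologicalSpace X] {A : Set X}

lemma IsCCompact.inter_preimage (hA : IsCCompact A) (g : C(X, ℝ)) {K : Set ℝ} (hK : IsClosed K) :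
    IsCCompact (A ∩ g ⁻¹' K) := by
  intro f
  refine (hA f).of_isClosed_subset ?_ (image_mono inter_subset_left)
  refine closure_subset_iff_isClosed.1 fun s hs => ?_
  obtain ⟨_, x₀, ⟨-, hx₀⟩, -⟩ := closure_nonempty_iff.1 ⟨s, hs⟩
  -- The zeros of `h` are the points of `g ⁻¹' K` at which `f` takes the value `s`.
  let h : C(X, ℝ) := ⟨fun x => |f x - s| + Metric.infDist (g x) K,
    (by fun_prop : Continuous fun x => |f x - s|).add
      ((Metric.continuous_infDist_pt K).comp g.continuous)⟩
  have h_maps : MapsTo (fun t => |t - s|) (f '' (A ∩ g ⁻¹' K)) (h '' A) := by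
    rintro _ ⟨x, ⟨hxA, hxK⟩, rfl⟩
    exact ⟨x, hxA, by simp [h, Metric.infDist_zero_of_mem (mem_preimage.1 hxK)]⟩
  have h_zero : (0 : ℝ) ∈ closure (h '' A) := by
    simpa using map_mem_closure (by fun_prop) hs h_maps
  rw [(hA h).isClosed.closure_eq] at h_zero
  obtain ⟨x, hxA, hx⟩ := h_zero
  obtain ⟨hfx, hgx⟩ :=
    (add_eq_zero_iff_of_nonneg (abs_nonneg (f x - s)) Metric.infDist_nonneg).1 hx
  exact ⟨x, ⟨hxA, (hK.mem_iff_infDist_zero ⟨_, hx₀⟩).2 hgx⟩, sub_eq_zero.1 (abs_eq_zero.1 hfx)⟩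

lemma IsCCompact.exists_pos_forall_le_abs (hA : IsCCompact A) {k : C(X, ℝ)}
    (hk : ∀ x ∈ A, k x ≠ 0) : ∃ δ > 0, ∀ x ∈ A, δ ≤ |k x| := by
  have h_nhds : (k '' A)ᶜ ∈ 𝓝 (0 : ℝ) :=
    (hA k).isClosed.isOpen_compl.mem_nhds fun ⟨x, hx, hx0⟩ => hk x hx hx0
  obtain ⟨δ, hδ, h_ball⟩ := Metric.mem_nhds_iff.1 h_nhds
  refine ⟨δ, hδ, fun x hx => ?_⟩
  by_contra! hlt
  exact h_ball (by simpa using hlt) (mem_image_of_mem k hx)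

lemma IsCCompact.exists_eqOn_zero_eqOn_one (hA : IsCCompact A) {U : Set X} (hU : IsCozero U)
    (hAU : A ⊆ U) : ∃ g : C(X, ℝ), EqOn g 0 A ∧ EqOn g 1 Uᶜ := by
  obtain ⟨k, rfl⟩ := hU
  obtain ⟨δ, hδ, hk⟩ := hA.exists_pos_forall_le_abs hAU
  refine ⟨⟨fun x => max 0 (1 - |k x| / δ), by fun_prop⟩, fun x hx => ?_, fun x hx => ?_⟩
  · exact max_eq_left (sub_nonpos.2 ((one_le_div hδ).2 (hk x hx)))
  · have hkx : k x = 0 := by simpa using hx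
    simp [hkx]

lemma isCozero_setOf_lt (f g : C(X, ℝ)) : IsCozero {x | f x < g x} :=
  ⟨⟨fun x => max 0 (g x - f x), by fun_prop⟩, by ext x; simp⟩

end CCompact

section UniformTopology

variable {X : Type*} [TopologicalSpace X] {lam : Set (Set X)}

/-- The topology on `C(X, ℝ)` of uniform convergence on the members of `lam`, pulled back from
Mathlib's topology on `X →ᵤ[lam] ℝ`. -/
abbrev uniformTopology (lam : Set (Set X)) : TopologicalSpace C(X, ℝ) :=
  (UniformOnFun.topologicalSpace X ℝ lam).induced fun f => UniformOnFun.ofFun lam f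

lemma eventually_nhds_uniformTopology {A : Set X} (hA : A ∈ lam) (f : C(X, ℝ)) {ε : ℝ}
    (hε : 0 < ε) : ∀ᶠ g in @nhds _ (uniformTopology lam) f, ∀ x ∈ A, dist (f x) (g x) < ε := by
  rw [uniformTopology, nhds_induced]
  exact preimage_mem_comap (UniformOnFun.gen_mem_nhds ℝ lam _ hA (Metric.dist_mem_uniformity hε))

lemma exists_dist_lt_of_mem_closure_uniformTopology {S : Set C(X, ℝ)} {f : C(X, ℝ)}
    (hf : f ∈ closure[uniformTopology lam] S) {A : Set X} (hA : A ∈ lam) {ε : ℝ} (hε : 0 < ε) :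
    ∃ g ∈ S, ∀ x ∈ A, dist (f x) (g x) < ε := by
  let := uniformTopology lam
  exact (mem_closure_iff_frequently.1 hf).and_eventually
    (eventually_nhds_uniformTopology hA f hε) |>.exists

lemma mem_closure_uniformTopology (hne : lam.Nonempty) (hdir : DirectedOn (· ⊆ ·) lam)
    {S : Set C(X, ℝ)} {f : C(X, ℝ)}
    (h : ∀ A ∈ lam, ∀ ε > 0, ∃ g ∈ S, ∀ x ∈ A, dist (f x) (g x) < ε) :
    f ∈ closure[uniformTopology lam] S := by
  let := uniformTopology lam
  have h_basis := (UniformOnFun.hasBasis_nhds_of_basis X ℝ lam (UniformOnFun.ofFun lam f) hne hdir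
    Metric.uniformity_basis_dist).comap fun g : C(X, ℝ) => UniformOnFun.ofFun lam g
  rw [← nhds_induced] at h_basis
  refine (mem_closure_iff_nhds_basis h_basis).2 fun ⟨A, ε⟩ ⟨hA, hε⟩ => ?_
  obtain ⟨g, hg, hgA⟩ := h A hA ε hε
  exact ⟨g, hg, fun x hx => (dist_comm _ _).trans_lt (hgA x hx)⟩

end UniformTopology

section SetOpenTopology

variable {X : Type*} [TopologicalSpace X] {lam : Set (Set X)}

lemma isOpen_setOpenTopology {F : Set X} (hF : F ∈ lam) {U : Set ℝ} (hU : IsOpen U) :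
    IsOpen[setOpenTopology lam] {f : C(X, ℝ) | f '' F ⊆ U} :=
  isOpen_generateFrom_of_mem ⟨F, hF, U, hU, rfl⟩

lemma setOpenTopology_empty : setOpenTopology (∅ : Set (Set X)) = ⊤ :=
  eq_top_iff.2 (le_generateFrom fun _ ⟨_, hF, _⟩ => hF.elim)

lemma uniformTopology_le_setOpenTopology (hcc : ∀ A ∈ lam, IsCCompact A) :
    uniformTopology lam ≤ setOpenTopology lam := by
  let := uniformTopology lam
  refine le_generateFrom ?_
  rintro _ ⟨F, hF, U, hU, rfl⟩
  refine isOpen_iff_mem_nhds.2 fun f hf => ?_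
  obtain ⟨δ, hδ, h_thick⟩ := (hcc F hF f).exists_thickening_subset_open hU hf
  filter_upwards [eventually_nhds_uniformTopology hF f hδ] with g hg
  rintro _ ⟨x, hx, rfl⟩
  exact h_thick (Metric.mem_thickening_iff.2
    ⟨f x, mem_image_of_mem f hx, dist_comm (f x) (g x) ▸ hg x hx⟩)

/-- A family of C-compact sets, directed by inclusion and stable under passing to the nonempty
slices `A ∩ f ⁻¹' K`, `K ⊆ ℝ` closed. These are the features of the families in `Ψ` that make
`setOpenTopology lam` a topology of uniform convergence with basic neighbourhoods
`{g | |g - f| < ε on A}`. -/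
structure IsSlicedFamily (lam : Set (Set X)) : Prop where
  ccompact : ∀ A ∈ lam, IsCCompact A
  slice_mem : ∀ A ∈ lam, ∀ f : C(X, ℝ), ∀ K : Set ℝ, IsClosed K → (A ∩ f ⁻¹' K).Nonempty →
    A ∩ f ⁻¹' K ∈ lam
  directedOn : DirectedOn (· ⊆ ·) lam

lemma IsSlicedFamily.eventually_nhds_setOpenTopology (h : IsSlicedFamily lam) {A : Set X}
    (hA : A ∈ lam) (f : C(X, ℝ)) {ε : ℝ} (hε : 0 < ε) :
    ∀ᶠ g in @nhds _ (setOpenTopology lam) f, ∀ x ∈ A, dist (f x) (g x) < ε := by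
  let := setOpenTopology lam
  obtain ⟨t, htA, ht_fin, ht_cover⟩ :=
    (h.ccompact A hA f).finite_cover_balls (e := ε / 4) (by positivity)
  have h_slice : ∀ c ∈ t, ∀ᶠ g : C(X, ℝ) in 𝓝 f,
      g '' (A ∩ f ⁻¹' Metric.closedBall c (ε / 4)) ⊆ Metric.ball c (ε / 2) := by
    intro c hc
    obtain ⟨x, hx, rfl⟩ := htA hc
    have h_mem := h.slice_mem A hA f _ Metric.isClosed_closedBall
      ⟨x, hx, Metric.mem_closedBall_self (by positivity : 0 ≤ ε / 4)⟩
    refine (isOpen_setOpenTopology h_mem Metric.isOpen_ball).mem_nhds ?_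
    rintro _ ⟨y, ⟨-, hy⟩, rfl⟩
    exact Metric.closedBall_subset_ball (by linarith) hy
  filter_upwards [(eventually_all_finite ht_fin).2 h_slice] with g hg x hx
  obtain ⟨c, hc, hfx⟩ := mem_iUnion₂.1 (ht_cover (mem_image_of_mem f hx))
  have hgx : dist (g x) c < ε / 2 := hg c hc ⟨x, ⟨hx, Metric.ball_subset_closedBall hfx⟩, rfl⟩
  calc dist (f x) (g x) ≤ dist (f x) c + dist (g x) c := dist_triangle_right _ _ _
    _ < ε / 4 + ε / 2 := add_lt_add hfx hgx
    _ < ε := by linarith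

theorem IsSlicedFamily.setOpenTopology_eq_uniformTopology (h : IsSlicedFamily lam) :
    setOpenTopology lam = uniformTopology lam := by
  refine le_antisymm ?_ (uniformTopology_le_setOpenTopology h.ccompact)
  let := setOpenTopology lam
  refine continuous_iff_le_induced.1 (continuous_iff_continuousAt.2 fun f => ?_)
  refine UniformOnFun.tendsto_iff_tendstoUniformlyOn.2 fun A hA => ?_
  exact Metric.tendstoUniformlyOn_iff.2 fun ε hε => h.eventually_nhds_setOpenTopology hA f hε

lemma setOpenTopology_insert_union {A B : Set X} (hA : A ∈ lam) (hB : B ∈ lam) :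
    setOpenTopology (insert (A ∪ B) lam) = setOpenTopology lam := by
  apply le_antisymm
  · refine le_generateFrom ?_
    rintro _ ⟨F, hF, U, hU, rfl⟩
    exact isOpen_setOpenTopology (mem_insert_of_mem _ hF) hU
  · refine le_generateFrom ?_
    rintro _ ⟨F, rfl | hF, U, hU, rfl⟩
    · let := setOpenTopology lam
      simpa only [image_union, union_subset_iff, ofPred_and] using
        (isOpen_setOpenTopology hA hU).inter (isOpen_setOpenTopology hB hU)
    · exact isOpen_setOpenTopology hF hU

lemma MemPsi.union_mem (h : MemPsi lam) {A B : Set X} (hA : A ∈ lam) (hB : B ∈ lam) :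
    A ∪ B ∈ lam := by
  refine h.maximal _ ?_ (setOpenTopology_insert_union hA hB) (mem_insert _ _)
  exact forall_mem_insert.2 ⟨(h.nonempty A hA).mono subset_union_left, h.nonempty⟩

lemma MemPsi.isSlicedFamily (h : MemPsi lam) : IsSlicedFamily lam where
  ccompact := h.ccompact
  slice_mem A hA f _ hK hne := h.hereditary A hA _ inter_subset_left hne
    ((h.closed A hA).inter (hK.preimage f.continuous)) ((h.ccompact A hA).inter_preimage f hK)
  directedOn := directedOn_of_sup_mem fun _ _ => h.union_mem

end SetOpenTopology

section TightnessOfLindelof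

variable {X : Type*} [TopologicalSpace X] {lam mu : Set (Set X)}

lemma LamMuLindelof.exists_countable_dist_lt (hL : LamMuLindelof lam mu) {S : Set C(X, ℝ)}
    {f : C(X, ℝ)} {ε : ℝ} (hS : ∀ A ∈ lam, ∃ g ∈ S, ∀ x ∈ A, dist (f x) (g x) < ε) :
    ∃ B ⊆ S, B.Countable ∧ ∀ A ∈ mu, ∃ g ∈ B, ∀ x ∈ A, dist (f x) (g x) < ε := by
  let V : C(X, ℝ) → Set X := fun g => {x | dist (f x) (g x) < ε}
  by_cases h_univ : univ ∈ V '' S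
  · obtain ⟨g, hg, hgV⟩ := h_univ
    exact ⟨{g}, singleton_subset_iff.2 hg, countable_singleton g,
      fun A _ => ⟨g, rfl, fun x _ => eq_univ_iff_forall.1 hgV x⟩⟩
  · have h_cover : IsFCover lam (V '' S) := by
      refine ⟨h_univ, forall_mem_image.2 fun g _ => ?_, fun A hA => exists_mem_image.2 (hS A hA)⟩
      exact isCozero_setOf_lt ⟨fun x => dist (f x) (g x), by fun_prop⟩ (.const X ε)
    obtain ⟨𝒱, h𝒱S, h𝒱_count, -, -, h𝒱_cover⟩ := hL _ h_cover
    obtain ⟨B, hBS, h_bij⟩ := ((surjOn_image V S).mono subset_rfl h𝒱S).exists_bijOn_subset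
    refine ⟨B, hBS, ?_, fun A hA => ?_⟩
    · exact countable_of_injective_of_countable_image h_bij.injOn (h_bij.image_eq ▸ h𝒱_count)
    · obtain ⟨U, hU, hAU⟩ := h𝒱_cover A hA
      obtain ⟨g, hg, rfl⟩ := h_bij.surjOn hU
      exact ⟨g, hg, hAU⟩

theorem LamMuLindelof.countableBiTightness (hL : LamMuLindelof lam mu) (hne : mu.Nonempty)
    (hdir : DirectedOn (· ⊆ ·) mu) :
    CountableBiTightness (uniformTopology lam) (uniformTopology mu) := by
  intro S f hf
  have h_approx (n : ℕ) : ∃ B ⊆ S, B.Countable ∧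
      ∀ A ∈ mu, ∃ g ∈ B, ∀ x ∈ A, dist (f x) (g x) < 1 / ((n : ℝ) + 1) :=
    hL.exists_countable_dist_lt fun A hA =>
      exists_dist_lt_of_mem_closure_uniformTopology hf hA Nat.one_div_pos_of_nat
  choose B hBS hB_count hB using h_approx
  refine ⟨⋃ n, B n, iUnion_subset hBS, countable_iUnion hB_count, ?_⟩
  refine mem_closure_uniformTopology hne hdir fun A hA ε hε => ?_
  obtain ⟨n, hn⟩ := exists_nat_one_div_lt hε
  obtain ⟨g, hg, hgA⟩ := hB n A hA
  exact ⟨g, mem_iUnion_of_mem n hg, fun x hx => (hgA x hx).trans hn⟩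

end TightnessOfLindelof

lemma subset_of_eqOn_one_compl {X : Type*} {A U : Set X} {g : X → ℝ} (hgU : EqOn g 1 Uᶜ)
    (hgA : ∀ x ∈ A, dist 0 (g x) < 1) : A ⊆ U := by
  intro x hxA
  by_contra hxU
  simpa [hgU hxU] using hgA x hxA

section LindelofOfTightness

variable {X : Type*} [TopologicalSpace X] {lam mu 𝒰 : Set (Set X)}

/-- The set of functions attached to a cover `𝒰` to test tightness at `0`: those with constant
value `1` off some member of `𝒰`. -/
def eqOneOff (𝒰 : Set (Set X)) : Set C(X, ℝ) :=
  {g | ∃ U ∈ 𝒰, EqOn g 1 Uᶜ}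

lemma IsFCover.zero_mem_closure_eqOneOff (h𝒰 : IsFCover lam 𝒰) (hne : lam.Nonempty)
    (hdir : DirectedOn (· ⊆ ·) lam) (hcc : ∀ A ∈ lam, IsCCompact A) :
    0 ∈ closure[uniformTopology lam] (eqOneOff 𝒰) := by
  obtain ⟨-, h_cozero, h_cover⟩ := h𝒰
  refine mem_closure_uniformTopology hne hdir fun A hA ε hε => ?_
  obtain ⟨U, hU, hAU⟩ := h_cover A hA
  obtain ⟨g, hg0, hg1⟩ := (hcc A hA).exists_eqOn_zero_eqOn_one (h_cozero U hU) hAU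
  exact ⟨g, ⟨U, hU, hg1⟩, fun x hx => by simpa [hg0 hx] using hε⟩

theorem CountableBiTightness.lamMuLindelof
    (h : CountableBiTightness (uniformTopology lam) (uniformTopology mu)) (hne : lam.Nonempty)
    (hdir : DirectedOn (· ⊆ ·) lam) (hcc : ∀ A ∈ lam, IsCCompact A) : LamMuLindelof lam mu := by
  intro 𝒰 h𝒰
  obtain ⟨B, hB, hB_count, hB0⟩ := h _ 0 (h𝒰.zero_mem_closure_eqOneOff hne hdir hcc)
  have h_witness : ∀ g ∈ B, ∃ U ∈ 𝒰, EqOn g 1 Uᶜ := hB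
  choose! u hu𝒰 hu1 using h_witness
  have h_sub : u '' B ⊆ 𝒰 := image_subset_iff.2 hu𝒰
  refine ⟨u '' B, h_sub, hB_count.image u, notMem_subset h_sub h𝒰.1,
    fun U hU => h𝒰.2.1 U (h_sub hU), fun A hA => ?_⟩
  obtain ⟨g, hg, hgA⟩ := exists_dist_lt_of_mem_closure_uniformTopology hB0 hA one_pos
  exact ⟨u g, mem_image_of_mem u hg, subset_of_eqOn_one_compl (hu1 g hg) hgA⟩

end LindelofOfTightness

lemma countableBiTightness_top {Y : Type*} (t : TopologicalSpace Y) :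
    CountableBiTightness t ⊤ := by
  intro A f hf
  obtain ⟨a, ha⟩ := (@closure_nonempty_iff _ t A).1 ⟨f, hf⟩
  refine ⟨{a}, singleton_subset_iff.2 ha, countable_singleton a, ?_⟩
  let : TopologicalSpace Y := ⊤
  have : IndiscreteTopology Y := ⟨rfl⟩
  simp only [closure_indiscrete (singleton_nonempty a), mem_univ]

lemma lamMuLindelof_empty {X : Type*} [TopologicalSpace X] (lam : Set (Set X)) :
    LamMuLindelof lam ∅ := fun _ _ =>
  ⟨∅, empty_subset _, countable_empty, notMem_empty _, by simp, by simp⟩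

theorem countableBiTightness_iff_lamMuLindelof_general {X : Type*} [TopologicalSpace X]
    {lam mu : Set (Set X)} (hlam : IsSlicedFamily lam) (hmu : IsSlicedFamily mu)
    (hne : mu.Nonempty → lam.Nonempty) :
    CountableBiTightness (setOpenTopology lam) (setOpenTopology mu) ↔ LamMuLindelof lam mu := by
  obtain rfl | hmu_ne := mu.eq_empty_or_nonempty
  · rw [setOpenTopology_empty]
    exact iff_of_true (countableBiTightness_top _) (lamMuLindelof_empty lam)
  · rw [hlam.setOpenTopology_eq_uniformTopology, hmu.setOpenTopology_eq_uniformTopology]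
    exact ⟨fun h => h.lamMuLindelof (hne hmu_ne) hlam.directedOn hlam.ccompact,
      fun h => h.countableBiTightness hmu_ne hmu.directedOn⟩

/-- For a Tychonoff space `X` and `λ, μ ∈ Ψ` with `μ ⊆ λ`, the bitopological
space `(C(X), τ_λ, τ_μ)` has countable `(τ_λ, τ_μ)`-tightness iff `X` is `λ`-`μ`-Lindelöf. -/
theorem countableBiTightness_iff_lamMuLindelof
    {X : Type*} [TopologicalSpace X] [T35Space X]
    (lam mu : Set (Set X)) (hlam : MemPsi lam) (hmu : MemPsi mu) (hsub : mu ⊆ lam) :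
    CountableBiTightness (setOpenTopology lam) (setOpenTopology mu) ↔
      LamMuLindelof lam mu := by
  exact countableBiTightness_iff_lamMuLindelof_general hlam.isSlicedFamily hmu.isSlicedFamily
    fun h => h.mono hsub
end

section
/- Let X be a Tychonoff space and λ ∈ Ψ. Then C_λ(X) is a separable space if and only if X is separably λ-submetrizable. -/
open Set Filter Topology TopologicalSpace ContinuousMap

/-!
If `(dₙ)` is dense in `C_λ(X)`, the map `x ↦ (dₙ x)ₙ` into `ℕ → ℝ` is injective on `⋃ λ`: evaluation
at a point of `⋃ λ` is `τ_λ`-continuous, since `λ` contains the singleton of that point, so two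
evaluations that agree on all `dₙ` agree on all of `C(X, ℝ)`, which separates points.

Conversely, embedding the separable metric space into the Hilbert cube `H` gives a continuous
`f : X → H` that is injective on `⋃ λ`. A finite union `A` of members of `λ` is C-compact, hence has
compact image under `f` and under `(f, h)` for every `h ∈ C(X, ℝ)`; so `h` factors continuously
through `f` on `A`, and by Tietze's theorem it agrees on `A` with `g ∘ f` for some `g ∈ C(H, ℝ)`.
Thus `g ↦ g ∘ f` maps the separable space `C(H, ℝ)` continuously onto a dense subset of `C_λ(X)`.
-/

section CCompact

variable {X Y : Type*} [TopologicalSpace X] [TopologicalSpace Y] {A : Set X}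

theorem isCCompact_singleton (x : X) : IsCCompact {x} := fun f => by
  rw [image_singleton]
  exact isCompact_singleton

theorem IsCCompact.sUnion {S : Set (Set X)} (hS : S.Finite) (h : ∀ A ∈ S, IsCCompact A) :
    IsCCompact (⋃₀ S) := fun f => by
  rw [sUnion_eq_biUnion, image_iUnion₂]
  exact hS.isCompact_biUnion fun A hA => h A hA f

theorem IsCCompact.isClosed_image [MetrizableSpace Y] (hA : IsCCompact A) (f : C(X, Y)) :
    IsClosed (f '' A) := by
  let _ := metrizableSpaceMetric Y
  refine isClosed_of_closure_subset fun y hy => ?_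
  let distTo : C(X, ℝ) := ⟨fun x => dist (f x) y, by fun_prop⟩
  have dist_image : (dist · y) '' (f '' A) = distTo '' A := image_image ..
  have zero_mem_closure : 0 ∈ closure (distTo '' A) := by
    rw [← dist_image, ← dist_self y]
    exact image_closure_subset_closure_image (by fun_prop) (mem_image_of_mem _ hy)
  obtain ⟨x, hxA, hx⟩ := (hA distTo).isClosed.closure_subset zero_mem_closure
  exact ⟨x, hxA, dist_eq_zero.1 hx⟩

theorem IsCCompact.isCompact_image [MetrizableSpace Y] [SeparableSpace Y] (hA : IsCCompact A)
    (f : C(X, Y)) : IsCompact (f '' A) := by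
  let _ := metrizableSpaceMetric Y
  obtain ⟨e, he⟩ := Metric.PiNatEmbed.exists_embedding_to_hilbert_cube (X := Y)
  rw [he.isCompact_iff, image_image]
  exact (hA.isClosed_image ⟨fun x => e (f x), by fun_prop⟩).isCompact

theorem IsCCompact.exists_eqOn_comp [MetrizableSpace Y] [SeparableSpace Y] (hA : IsCCompact A)
    {f : C(X, Y)} (hf : InjOn f A) (h : C(X, ℝ)) :
    ∃ g : C(Y, ℝ), EqOn (g.comp f) h A := by
  -- `f '' A` is homeomorphic to the compact graph `(f, h) '' A`, on which `h` is a projection.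
  let graph : Set (Y × ℝ) := f.prodMk h '' A
  have : CompactSpace graph := isCompact_iff_compactSpace.1 (hA.isCompact_image _)
  have fst_injective : Function.Injective fun p : graph => p.1.1 := by
    rintro ⟨_, x, hx, rfl⟩ ⟨_, x', hx', rfl⟩ hxx'
    exact Subtype.ext (congrArg (f.prodMk h) (hf hx hx' hxx'))
  have fst_isClosedEmbedding : IsClosedEmbedding fun p : graph => p.1.1 :=
    Continuous.isClosedEmbedding (by fun_prop) fst_injective
  obtain ⟨g, hg⟩ := exists_extension' fst_isClosedEmbedding ⟨fun p : graph => p.1.2, by fun_prop⟩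
  exact ⟨g, fun x hx => congrFun hg ⟨_, mem_image_of_mem _ hx⟩⟩

end CCompact

section SetOpen

variable {X Y : Type*} [TopologicalSpace X] [TopologicalSpace Y] {lam : Set (Set X)}

theorem MemPsi.singleton_mem [T1Space X] (hlam : MemPsi lam) {x : X} (hx : x ∈ ⋃₀ lam) :
    {x} ∈ lam :=
  let ⟨A, hA, hxA⟩ := hx
  hlam.hereditary A hA {x} (singleton_subset_iff.2 hxA) (singleton_nonempty x)
    isClosed_singleton (isCCompact_singleton x)

theorem continuous_eval_setOpenTopology {x : X} (hx : {x} ∈ lam) :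
    Continuous[setOpenTopology lam, _] fun f : C(X, ℝ) => f x := by
  let _ := setOpenTopology lam
  refine continuous_def.2 fun U hU => isOpen_generateFrom_of_mem ⟨{x}, hx, U, hU, ?_⟩
  simp only [image_singleton, singleton_subset_iff]
  rfl

theorem injOn_eval_of_denseRange (hX : SeparatesPoints {f : X → ℝ | Continuous f}) {ι : Type*}
    {d : ι → C(X, ℝ)} (hd : @DenseRange _ (setOpenTopology lam) _ d) :
    InjOn (fun x i => d i x) {x | {x} ∈ lam} := by
  let _ := setOpenTopology lam
  intro x hx y hy hxy
  by_contra hne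
  obtain ⟨f, hf, hfxy⟩ := hX hne
  have eval_eq : (fun f : C(X, ℝ) => f x) = fun f => f y :=
    hd.equalizer (continuous_eval_setOpenTopology hx) (continuous_eval_setOpenTopology hy) hxy
  exact hfxy (congrFun eval_eq ⟨f, hf⟩)

theorem SeparablyLamSubmetrizable.of_separableSpace
    (hX : SeparatesPoints {f : X → ℝ | Continuous f}) (hlam : ∀ x ∈ ⋃₀ lam, {x} ∈ lam)
    (hsep : @SeparableSpace C(X, ℝ) (setOpenTopology lam)) :
    SeparablyLamSubmetrizable X lam := by
  let _ := setOpenTopology lam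
  let eval : X → ℕ → ℝ := fun x n => denseSeq C(X, ℝ) n x
  have continuous_eval : Continuous eval := by fun_prop
  have injOn_eval : InjOn eval (⋃₀ lam) :=
    (injOn_eval_of_denseRange hX (denseRange_denseSeq _)).mono hlam
  exact ⟨range eval, metrizableSpaceMetric _, inferInstance, rangeFactorization eval,
    continuous_eval.subtype_mk _, rangeFactorization_surjective,
    fun x hx y hy hxy => injOn_eval hx hy (congrArg Subtype.val hxy)⟩

theorem continuous_precomp_setOpenTopology [MetrizableSpace Y] [SeparableSpace Y]
    (hlam : ∀ A ∈ lam, IsCCompact A) (f : C(X, Y)) :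
    Continuous[_, setOpenTopology lam] fun g : C(Y, ℝ) => g.comp f := by
  refine continuous_generateFrom_iff.2 ?_
  rintro _ ⟨A, hA, U, hU, rfl⟩
  have isOpen_mapsTo := isOpen_setOfPred_mapsTo ((hlam A hA).isCompact_image f) hU
  simpa only [preimage_ofPred_eq, coe_comp, image_comp, mapsTo_iff_image_subset] using isOpen_mapsTo

theorem exists_finite_eqOn_sUnion_mem_of_isOpen {O : Set C(X, ℝ)}
    (hO : IsOpen[setOpenTopology lam] O) {h : C(X, ℝ)} (hh : h ∈ O) :
    ∃ S ⊆ lam, S.Finite ∧ ∀ g : C(X, ℝ), EqOn g h (⋃₀ S) → g ∈ O := by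
  induction hO with
  | basic _ hV =>
    obtain ⟨A, hA, U, -, rfl⟩ := hV
    refine ⟨{A}, singleton_subset_iff.2 hA, finite_singleton A, fun g hg => ?_⟩
    rw [sUnion_singleton] at hg
    exact hg.image_eq.trans_subset hh
  | univ => exact ⟨∅, empty_subset _, finite_empty, fun _ _ => mem_univ _⟩
  | inter V W _ _ ihV ihW =>
    obtain ⟨S, hS, hSfin, hSV⟩ := ihV hh.1
    obtain ⟨T, hT, hTfin, hTW⟩ := ihW hh.2
    refine ⟨S ∪ T, union_subset hS hT, hSfin.union hTfin, fun g hg => ?_⟩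
    rw [sUnion_union, eqOn_union] at hg
    exact ⟨hSV g hg.1, hTW g hg.2⟩
  | sUnion 𝒱 _ ih =>
    obtain ⟨V, hV, hhV⟩ := hh
    obtain ⟨S, hS, hSfin, hSV⟩ := ih V hV hhV
    exact ⟨S, hS, hSfin, fun g hg => ⟨V, hV, hSV g hg⟩⟩

theorem denseRange_precomp_setOpenTopology [MetrizableSpace Y] [SeparableSpace Y]
    (hlam : ∀ A ∈ lam, IsCCompact A) {f : C(X, Y)} (hf : InjOn f (⋃₀ lam)) :
    @DenseRange _ (setOpenTopology lam) _ fun g : C(Y, ℝ) => g.comp f := by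
  let _ := setOpenTopology lam
  refine dense_iff_inter_open.2 ?_
  rintro O hO ⟨h, hhO⟩
  obtain ⟨S, hSlam, hSfin, hSO⟩ := exists_finite_eqOn_sUnion_mem_of_isOpen hO hhO
  have hS : IsCCompact (⋃₀ S) := .sUnion hSfin fun A hA => hlam A (hSlam hA)
  obtain ⟨g, hg⟩ := hS.exists_eqOn_comp (hf.mono (sUnion_subset_sUnion hSlam)) h
  exact ⟨g.comp f, hSO _ hg, g, rfl⟩

theorem SeparablyLamSubmetrizable.separableSpace (hX : SeparablyLamSubmetrizable X lam)
    (hlam : ∀ A ∈ lam, IsCCompact A) : @SeparableSpace C(X, ℝ) (setOpenTopology lam) := by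
  obtain ⟨Y, _, _, f, hf, -, hinj⟩ := hX
  obtain ⟨e, he⟩ := Metric.PiNatEmbed.exists_embedding_to_hilbert_cube (X := Y)
  let F : C(X, ℕ → unitInterval) := ⟨e ∘ f, he.continuous.comp hf⟩
  let _ := setOpenTopology lam
  have hF : InjOn F (⋃₀ lam) := he.injective.comp_injOn hinj
  exact (denseRange_precomp_setOpenTopology hlam hF).separableSpace
    (continuous_precomp_setOpenTopology hlam F)

theorem separable_iff_separablyLamSubmetrizable_general
    (hX : SeparatesPoints {f : X → ℝ | Continuous f})
    (hcompact : ∀ A ∈ lam, IsCCompact A) (hsingleton : ∀ x ∈ ⋃₀ lam, {x} ∈ lam) :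
    @SeparableSpace C(X, ℝ) (setOpenTopology lam) ↔ SeparablyLamSubmetrizable X lam :=
  ⟨.of_separableSpace hX hsingleton, fun h => h.separableSpace hcompact⟩

end SetOpen

/-- For a Tychonoff space `X` and `λ ∈ Ψ`, `C_λ(X)` is separable iff `X` is
separably `λ`-submetrizable. -/
theorem separable_iff_separablyLamSubmetrizable
    {X : Type*} [TopologicalSpace X] [T35Space X]
    (lam : Set (Set X)) (hlam : MemPsi lam) :
    @SeparableSpace C(X, ℝ) (setOpenTopology lam) ↔ SeparablyLamSubmetrizable X lam :=
  separable_iff_separablyLamSubmetrizable_general separatesPoints_continuous_of_t35Space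
    hlam.ccompact fun _ => hlam.singleton_mem
end
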